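/- arXiv:2605.20841 — 2 statements merged into one kernel-verified Lean document; each statement's English description precedes it below -/
import Mathlib

section
/- Let A₁,…,A_m and B₁,…,B_n be Dyment–Muchnik D-mass problems. Then, up to ≡_D, ((A₁∧⋯∧A_m) → (B₁∧⋯∧B_n)) ≡_D C₁ ⊕ ⋯ ⊕ C_m, where C_i = (A_i→B₁)∧⋯∧(A_i→B_n), the finite meets ∧ and joins ⊕ being iterated binary operations (any association gives ≡_D-equivalent problems). -/
/-!
The equivalence is assembled from two binary laws by induction on the numbers of meetands, using
that `∧` and `⊕` respect `≡_D`.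

* `arrow_wedge_left`: `(A ∧ A') → B ≡ (A → B) ⊕ (A' → B)`. This holds for all mass problems: an
  operator acting on `A ∧ A'` reads the tag of its input and then acts as one of two operators.
* `arrow_wedge_right`: `A → (B ∧ B') ≡ (A → B) ∧ (A → B')` for Dyment–Muchnik `A`. Given
  `e⌢φ ∈ A → (B ∧ B')`, it has to be decided, uniformly in `e⌢φ`, which of `B`, `B'` is solved.
  The point (`head_unique`) is that the tag `Φ_e(φ ⊕ ψ)(0)` does not depend on `ψ`, and that even
  second arguments `σ`, `σ'` outside `A` cannot yield different tags. Indeed, a copy of some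
  `ψ ∈ A` placed beyond the uses of both computations is again in `A`, as are its extensions by
  finite parts of `σ` and of `σ'`; so the tag given by the bare copy agrees with both tags.
  Coding `ψ` as a restriction of the zero function shows that the tag is already enumerated with
  the zero function as second argument, so it is the value at `0` of `Φ_e(φ ⊕ 0)`, and an
  enumeration operator can produce it from `e⌢φ`.

Enumeration operators are handled through `EOpen` and `EOp`: operators given by primitive recursive
families of finite conditions, which are closed under composition, case distinction, and
application of `Φ_e` with `e` read from the input. `EOp.exists_ce` and `eop_enumOp` translate
between these and operators `enumOp W` with `W` c.e.
-/

def Dset (u : ℕ) : Set ℕ := {i | Nat.testBit u i}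

def enumOp (W A : Set ℕ) : Set ℕ := {x | ∃ u, Nat.pair x u ∈ W ∧ Dset u ⊆ A}

def CE (W : Set ℕ) : Prop := ∃ f : ℕ →. ℕ, Partrec f ∧ W = f.Dom

def EnumRed (A B : Set ℕ) : Prop := ∃ W, CE W ∧ A = enumOp W B

def EnumEq (A B : Set ℕ) : Prop := EnumRed A B ∧ EnumRed B A

def WeStd (e : ℕ) : Set ℕ := {x | ((Denumerable.ofNat Nat.Partrec.Code e).eval x).Dom}

def PhiStd (e : ℕ) : Set ℕ → Set ℕ := enumOp (WeStd e)

def pgraph (φ : ℕ →. ℕ) : Set ℕ := {n | n.unpair.2 ∈ φ n.unpair.1}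

def peRed (φ ψ : ℕ →. ℕ) : Prop := EnumRed (pgraph φ) (pgraph ψ)

def pfAdd (φ ψ : ℕ →. ℕ) : ℕ →. ℕ := fun n => if n % 2 = 0 then φ (n / 2) else ψ (n / 2)

def pfCons (i : ℕ) (φ : ℕ →. ℕ) : ℕ →. ℕ := fun n => if n = 0 then Part.some i else φ (n - 1)

abbrev MassPb := Set (ℕ →. ℕ)

def mpPlus (A B : MassPb) : MassPb := {h | ∃ φ ∈ A, ∃ ψ ∈ B, h = pfAdd φ ψ}

def mpCons (i : ℕ) (A : MassPb) : MassPb := pfCons i '' A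

def mpWedge (A B : MassPb) : MassPb := mpCons 0 A ∪ mpCons 1 B

def mpArrow (A B : MassPb) : MassPb :=
  {h | ∃ e φ, h = pfCons e φ ∧ ∀ ψ ∈ A, ∃ χ ∈ B, pgraph χ = PhiStd e (pgraph (pfAdd φ ψ))}

def DRed (A B : MassPb) : Prop :=
  ∃ W, CE W ∧ ∀ ψ ∈ B, ∃ χ ∈ A, pgraph χ = enumOp W (pgraph ψ)

def DEq (A B : MassPb) : Prop := DRed A B ∧ DRed B A

def DwRed (A B : MassPb) : Prop := ∀ ψ ∈ B, ∃ φ ∈ A, peRed φ ψ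

def DwEq (A B : MassPb) : Prop := DwRed A B ∧ DwRed B A

def UpClosedE (A : MassPb) : Prop := ∀ φ ψ, φ ∈ A → peRed φ ψ → ψ ∈ A

def DMProblem (A : MassPb) : Prop := A.Nonempty ∧ UpClosedE A

def PartCompFn (φ : ℕ →. ℕ) : Prop := CE (pgraph φ)

def oplus (A B : Set ℕ) : Set ℕ := (fun x => 2*x) '' A ∪ (fun x => 2*x+1) '' B

/-- Iterated binary meet `C 0 ∧ (C 1 ∧ (⋯ ∧ C m))`. -/
def bigWedge : (m : ℕ) → (Fin (m + 1) → MassPb) → MassPb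
  | 0, C => C 0
  | m + 1, C => mpWedge (C 0) (bigWedge m (fun i => C i.succ))

/-- Iterated binary join `C 0 ⊕ (C 1 ⊕ (⋯ ⊕ C m))`. -/
def bigPlus : (m : ℕ) → (Fin (m + 1) → MassPb) → MassPb
  | 0, C => C 0
  | m + 1, C => mpPlus (C 0) (bigPlus m (fun i => C i.succ))

/-! ### Enumeration operators as open predicates -/

/-- `P a X` is an *enumeration-open* predicate of `a` and `X`: it holds iff one of a primitive
recursive family of finite conditions `L (a, s) ⊆ X` (those with `R (a, s)`) is satisfied. The
witnesses `s` may range over any coded type, which keeps the closure properties free of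
pairing functions. -/
def EOpen {α : Type} [Primcodable α] (P : α → Set ℕ → Prop) : Prop :=
  ∃ (σ : Type) (_ : Primcodable σ) (R : α × σ → Bool) (L : α × σ → List ℕ),
    Primrec R ∧ Primrec L ∧ ∀ a X, P a X ↔ ∃ s, R (a, s) = true ∧ ∀ z ∈ L (a, s), z ∈ X

section EOpen

variable {α β : Type} [Primcodable α] [Primcodable β]

theorem EOpen.of_iff {P Q : α → Set ℕ → Prop} (hP : EOpen P) (h : ∀ a X, P a X ↔ Q a X) :
    EOpen Q := by
  have : P = Q := by
    funext a X
    exact propext (h a X)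
  exact this ▸ hP

theorem EOpen.mem {g : α → ℕ} (hg : Primrec g) : EOpen (fun a X => g a ∈ X) := by
  refine ⟨Unit, inferInstance, fun _ => true, fun p => [g p.1], Primrec.const _, ?_, ?_⟩
  · exact Primrec.list_cons.comp (hg.comp Primrec.fst) (Primrec.const [])
  · simp

theorem EOpen.pred {p : α → Prop} (hp : PrimrecPred p) : EOpen (fun a _ => p a) := by
  classical
  refine ⟨Unit, inferInstance, fun q => decide (p q.1), fun _ => [], ?_, Primrec.const _, ?_⟩
  · exact hp.decide.comp Primrec.fst
  · simp

theorem EOpen.comp {P : β → Set ℕ → Prop} (hP : EOpen P) {g : α → β} (hg : Primrec g) :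
    EOpen (fun a X => P (g a) X) := by
  obtain ⟨σ, _, R, L, hR, hL, h⟩ := hP
  have hk : Primrec (fun q : α × σ => (g q.1, q.2)) :=
    Primrec.pair (hg.comp Primrec.fst) Primrec.snd
  exact ⟨σ, _, _, _, hR.comp hk, hL.comp hk, fun a X => h (g a) X⟩

theorem EOpen.and {P Q : α → Set ℕ → Prop} (hP : EOpen P) (hQ : EOpen Q) :
    EOpen (fun a X => P a X ∧ Q a X) := by
  obtain ⟨σ, _, R, L, hR, hL, h⟩ := hP
  obtain ⟨σ', _, R', L', hR', hL', h'⟩ := hQ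
  have hk : Primrec (fun q : α × (σ × σ') => (q.1, q.2.1)) :=
    Primrec.pair Primrec.fst (Primrec.fst.comp Primrec.snd)
  have hk' : Primrec (fun q : α × (σ × σ') => (q.1, q.2.2)) :=
    Primrec.pair Primrec.fst (Primrec.snd.comp Primrec.snd)
  refine ⟨σ × σ', inferInstance, fun q => R (q.1, q.2.1) && R' (q.1, q.2.2),
    fun q => L (q.1, q.2.1) ++ L' (q.1, q.2.2),
    Primrec.and.comp (hR.comp hk) (hR'.comp hk'),
    Primrec.list_append.comp (hL.comp hk) (hL'.comp hk'), fun a X => ?_⟩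
  beta_reduce
  rw [h, h']
  constructor
  · rintro ⟨⟨s, h1, h2⟩, ⟨t, h3, h4⟩⟩
    refine ⟨(s, t), by simp [h1, h3], fun z hz => ?_⟩
    rcases List.mem_append.1 hz with hz | hz
    exacts [h2 z hz, h4 z hz]
  · rintro ⟨⟨s, t⟩, h1, h2⟩
    simp only [Bool.and_eq_true] at h1
    exact ⟨⟨s, h1.1, fun z hz => h2 z (List.mem_append_left _ hz)⟩,
      ⟨t, h1.2, fun z hz => h2 z (List.mem_append_right _ hz)⟩⟩

theorem EOpen.exist {P : α × β → Set ℕ → Prop} (hP : EOpen P) :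
    EOpen (fun a X => ∃ b, P (a, b) X) := by
  obtain ⟨σ, _, R, L, hR, hL, h⟩ := hP
  have hk : Primrec (fun q : α × (β × σ) => ((q.1, q.2.1), q.2.2)) :=
    Primrec.pair (Primrec.pair Primrec.fst (Primrec.fst.comp Primrec.snd))
      (Primrec.snd.comp Primrec.snd)
  refine ⟨β × σ, inferInstance, _, _, hR.comp hk, hL.comp hk, fun a X => ?_⟩
  simp only [h, Prod.exists]

theorem EOpen.or {P Q : α → Set ℕ → Prop} (hP : EOpen P) (hQ : EOpen Q) :
    EOpen (fun a X => P a X ∨ Q a X) := by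
  obtain ⟨σ, _, R, L, hR, hL, h⟩ := hP
  obtain ⟨σ', _, R', L', hR', hL', h'⟩ := hQ
  have hk : Primrec (fun q : (α × (σ ⊕ σ')) × σ => (q.1.1, q.2)) :=
    Primrec.pair (Primrec.fst.comp Primrec.fst) Primrec.snd
  have hk' : Primrec (fun q : (α × (σ ⊕ σ')) × σ' => (q.1.1, q.2)) :=
    Primrec.pair (Primrec.fst.comp Primrec.fst) Primrec.snd
  refine ⟨σ ⊕ σ', inferInstance,
    fun q => Sum.casesOn q.2 (fun s => R (q.1, s)) (fun s => R' (q.1, s)),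
    fun q => Sum.casesOn q.2 (fun s => L (q.1, s)) (fun s => L' (q.1, s)),
    Primrec.sumCasesOn (g := fun q s => R (q.1, s)) (h := fun q s => R' (q.1, s))
      Primrec.snd (hR.comp hk) (hR'.comp hk'),
    Primrec.sumCasesOn (g := fun q s => L (q.1, s)) (h := fun q s => L' (q.1, s))
      Primrec.snd (hL.comp hk) (hL'.comp hk'), fun a X => ?_⟩
  beta_reduce
  rw [h, h', Sum.exists]

/-- A witness for the bounded quantifier is a list matching each `z ∈ l a` with a witness of
`P (a, z)`. -/
theorem EOpen.forall_mem {P : α × ℕ → Set ℕ → Prop} (hP : EOpen P) {l : α → List ℕ}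
    (hl : Primrec l) : EOpen (fun a X => ∀ z ∈ l a, P (a, z) X) := by
  classical
  obtain ⟨σ, _, R, L, hR, hL, h⟩ := hP
  have hmap : Primrec (fun q : α × List (ℕ × σ) => q.2.map Prod.fst) :=
    Primrec.list_map Primrec.snd (Primrec.fst.comp Primrec.snd).to₂
  have hall : PrimrecPred (fun q : α × List (ℕ × σ) =>
      ∀ p ∈ q.2, R ((q.1, p.1), p.2) = true) := by
    have hk : Primrec (fun q : (ℕ × σ) × α => ((q.2, q.1.1), q.1.2)) :=
      Primrec.pair (Primrec.pair Primrec.snd (Primrec.fst.comp Primrec.fst))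
        (Primrec.snd.comp Primrec.fst)
    have hrel : PrimrecRel (fun (p : ℕ × σ) (a : α) => R ((a, p.1), p.2) = true) :=
      PrimrecRel.comp Primrec.eq (hR.comp hk) (Primrec.const true)
    exact hrel.forall_mem_list.comp Primrec.snd Primrec.fst
  have hcond : PrimrecPred (fun q : α × List (ℕ × σ) =>
      q.2.map Prod.fst = l q.1 ∧ ∀ p ∈ q.2, R ((q.1, p.1), p.2) = true) :=
    (PrimrecRel.comp Primrec.eq hmap (hl.comp Primrec.fst)).and hall
  have hk : Primrec (fun q : (α × List (ℕ × σ)) × (ℕ × σ) => ((q.1.1, q.2.1), q.2.2)) :=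
    Primrec.pair (Primrec.pair (Primrec.fst.comp Primrec.fst) (Primrec.fst.comp Primrec.snd))
      (Primrec.snd.comp Primrec.snd)
  refine ⟨List (ℕ × σ), inferInstance, _,
    fun q => q.2.flatMap (fun p => L ((q.1, p.1), p.2)), hcond.decide,
    Primrec.list_flatMap Primrec.snd (hL.comp hk).to₂, fun a X => ?_⟩
  simp only [h, decide_eq_true_eq, List.mem_flatMap]
  generalize l a = l
  constructor
  · intro H
    induction l with
    | nil => exact ⟨[], by simp⟩
    | cons z l ih =>
      obtain ⟨c, ⟨h1, h2⟩, h3⟩ := ih (fun z hz => H z (List.mem_cons_of_mem _ hz))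
      obtain ⟨s, h4, h5⟩ := H z List.mem_cons_self
      refine ⟨(z, s) :: c, ⟨by simp [h1], ?_⟩, ?_⟩
      · intro p hp
        rcases List.mem_cons.1 hp with rfl | hp
        exacts [h4, h2 p hp]
      · rintro w ⟨p, hp, hw⟩
        rcases List.mem_cons.1 hp with rfl | hp
        exacts [h5 w hw, h3 w ⟨p, hp, hw⟩]
  · rintro ⟨c, ⟨rfl, h2⟩, h3⟩ z hz
    obtain ⟨p, hp, rfl⟩ := List.mem_map.1 hz
    exact ⟨p.2, h2 p hp, fun w hw => h3 w ⟨p, hp, hw⟩⟩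

/-- Composition: substituting an operator `F a` for the set argument preserves openness. -/
theorem EOpen.subst {P : α → Set ℕ → Prop} (hP : EOpen P) {F : α → Set ℕ → Set ℕ}
    (hF : EOpen (fun (q : α × ℕ) X => q.2 ∈ F q.1 X)) : EOpen (fun a X => P a (F a X)) := by
  obtain ⟨σ, _, R, L, hR, hL, h⟩ := hP
  have h1 : EOpen (fun (q : α × σ) (_ : Set ℕ) => R q = true) :=
    EOpen.pred (PrimrecRel.comp Primrec.eq hR (Primrec.const true))
  have hk : Primrec (fun q : (α × σ) × ℕ => (q.1.1, q.2)) :=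
    Primrec.pair (Primrec.fst.comp Primrec.fst) Primrec.snd
  have h2 := (hF.comp hk).forall_mem hL
  exact (h1.and h2).exist.of_iff (fun a X => (h a (F a X)).symm)

end EOpen

theorem exists_dset_eq (l : List ℕ) : ∃ u, ∀ z, z ∈ Dset u ↔ z ∈ l := by
  induction l with
  | nil => exact ⟨0, by simp [Dset]⟩
  | cons a l ih =>
    obtain ⟨u, hu⟩ := ih
    refine ⟨2 ^ a ||| u, fun z => ?_⟩
    have := hu z
    simp only [Dset, Set.mem_ofPred_eq] at this
    simp only [Dset, Set.mem_ofPred_eq, Nat.testBit_or, Nat.testBit_two_pow, Bool.or_eq_true,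
      decide_eq_true_eq, this, List.mem_cons]
    rw [eq_comm (a := a)]

theorem lt_of_mem_dset {u z : ℕ} (h : z ∈ Dset u) : z < u := by
  have h1 : 2 ^ z ≤ u := Nat.ge_two_pow_of_testBit h
  exact lt_of_lt_of_le Nat.lt_two_pow_self h1

theorem primrecRel_mem_dset : PrimrecRel (fun z u : ℕ => z ∈ Dset u) := by
  have hpow : Primrec₂ ((· ^ ·) : ℕ → ℕ → ℕ) := Primrec₂.unpaired'.1 Nat.Primrec.pow
  have : PrimrecRel (fun z u : ℕ => u / 2 ^ z % 2 = 1) :=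
    PrimrecRel.comp Primrec.eq
      (Primrec.nat_mod.comp
        (Primrec.nat_div.comp Primrec.snd (hpow.comp (Primrec.const 2) Primrec.fst))
        (Primrec.const 2)) (Primrec.const 1)
  refine this.of_eq fun z u => ?_
  simp [Dset, Nat.testBit_eq_decide_div_mod_eq]

/-- Uniform membership in `Φ_e`: stage `(u, k)` succeeds when the `e`-th program halts on
`⟨x, u⟩` within the step bound `k`, and then asks for `D_u`. -/
theorem eopen_phi : EOpen (fun (q : ℕ × ℕ) X => q.2 ∈ PhiStd q.1 X) := by
  classical
  have h22 : Primrec (fun p : (ℕ × ℕ) × (ℕ × ℕ) => p.2.2) := Primrec.snd.comp Primrec.snd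
  have h21 : Primrec (fun p : (ℕ × ℕ) × (ℕ × ℕ) => p.2.1) := Primrec.fst.comp Primrec.snd
  have h11 : Primrec (fun p : (ℕ × ℕ) × (ℕ × ℕ) => p.1.1) := Primrec.fst.comp Primrec.fst
  have h12 : Primrec (fun p : (ℕ × ℕ) × (ℕ × ℕ) => p.1.2) := Primrec.snd.comp Primrec.fst
  refine ⟨ℕ × ℕ, inferInstance, fun p => (Nat.Partrec.Code.evaln p.2.2
      (Denumerable.ofNat Nat.Partrec.Code p.1.1) (Nat.pair p.1.2 p.2.1)).isSome,
    fun p => (List.range p.2.1).filter (fun z => z ∈ Dset p.2.1), ?_, ?_, ?_⟩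
  · exact Primrec.option_isSome.comp (Nat.Partrec.Code.primrec_evaln.comp
      (Primrec.pair (Primrec.pair h22 ((Primrec.ofNat _).comp h11))
        (Primrec₂.natPair.comp h12 h21)))
  · exact (PrimrecRel.listFilter primrecRel_mem_dset).comp (Primrec.list_range.comp h21) h21
  · rintro ⟨e, x⟩ X
    simp only [PhiStd, enumOp, WeStd, Set.mem_ofPred_eq, Prod.exists, List.mem_filter,
      List.mem_range, decide_eq_true_eq]
    refine exists_congr fun u => ?_
    rw [exists_and_right]
    refine and_congr ?_ ⟨fun h z hz => h hz.2, fun h z hz => h z ⟨lt_of_mem_dset hz, hz⟩⟩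
    rw [Part.dom_iff_mem]
    simp only [Nat.Partrec.Code.evaln_complete, Option.isSome_iff_exists, Option.mem_def]
    exact exists_comm

theorem CE.exists_index {W : Set ℕ} (hW : CE W) : ∃ e, W = WeStd e := by
  obtain ⟨f, hf, rfl⟩ := hW
  obtain ⟨c, hc⟩ := Nat.Partrec.Code.exists_code.1 (Partrec.nat_iff.1 hf)
  refine ⟨Encodable.encode c, ?_⟩
  ext x
  simp [WeStd, hc, PFun.mem_dom, Part.dom_iff_mem]

/-- `F` is an enumeration operator, in the intensional form of `EOpen`. -/
def EOp (F : Set ℕ → Set ℕ) : Prop := EOpen (fun x X => x ∈ F X)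

theorem eop_phi (e : ℕ) : EOp (PhiStd e) :=
  eopen_phi.comp (Primrec.pair (Primrec.const e) Primrec.id)

theorem eop_enumOp {W : Set ℕ} (hW : CE W) : EOp (enumOp W) := by
  obtain ⟨e, rfl⟩ := hW.exists_index
  exact eop_phi e

theorem EOp.exists_ce {F : Set ℕ → Set ℕ} (hF : EOp F) : ∃ W, CE W ∧ ∀ X, enumOp W X = F X := by
  classical
  obtain ⟨σ, _, R, L, hR, hL, h⟩ := hF
  have hk : Primrec (fun q : (ℕ × ℕ) × σ => (q.1.1.unpair.1, q.2)) :=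
    Primrec.pair (Primrec.fst.comp (Primrec.unpair.comp (Primrec.fst.comp Primrec.fst)))
      Primrec.snd
  have hsub : PrimrecPred (fun q : (ℕ × ℕ) × σ =>
      ∀ z ∈ L (q.1.1.unpair.1, q.2), z ∈ Dset q.1.1.unpair.2) :=
    primrecRel_mem_dset.forall_mem_list.comp (hL.comp hk)
      (Primrec.snd.comp (Primrec.unpair.comp (Primrec.fst.comp Primrec.fst)))
  have hc : PrimrecPred (fun q : (ℕ × ℕ) × σ => R (q.1.1.unpair.1, q.2) = true ∧
      ∀ z ∈ L (q.1.1.unpair.1, q.2), z ∈ Dset q.1.1.unpair.2) :=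
    (PrimrecRel.comp Primrec.eq (hR.comp hk) (Primrec.const true)).and hsub
  have hg : Primrec₂ (fun n k : ℕ => (Encodable.decode (α := σ) k).bind (fun s =>
      if R (n.unpair.1, s) = true ∧ ∀ z ∈ L (n.unpair.1, s), z ∈ Dset n.unpair.2
      then some 0 else (none : Option ℕ))) :=
    Primrec.option_bind (Primrec.decode.comp Primrec.snd)
      (Primrec.ite hc (Primrec.const (some 0)) (Primrec.const none)).to₂
  refine ⟨_, ⟨_, Partrec.rfindOpt hg.to_comp, rfl⟩, fun X => ?_⟩
  ext x
  have key : ∀ u, Nat.pair x u ∈ PFun.Dom (fun n : ℕ => Nat.rfindOpt (fun k : ℕ =>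
      (Encodable.decode (α := σ) k).bind (fun s =>
        if R (n.unpair.1, s) = true ∧ ∀ z ∈ L (n.unpair.1, s), z ∈ Dset n.unpair.2
        then some 0 else (none : Option ℕ)))) ↔
      ∃ s, R (x, s) = true ∧ ∀ z ∈ L (x, s), z ∈ Dset u := by
    intro u
    change (Nat.rfindOpt _).Dom ↔ _
    rw [Nat.rfindOpt_dom]
    simp only [Nat.unpair_pair, Option.mem_def, Option.bind_eq_some_iff]
    constructor
    · rintro ⟨k, a, s, -, hs⟩
      refine ⟨s, ?_⟩
      by_contra hn
      rw [if_neg hn] at hs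
      cases hs
    · rintro ⟨s, hs⟩
      exact ⟨Encodable.encode s, 0, s, Encodable.encodek s, if_pos hs⟩
  simp only [enumOp, Set.mem_ofPred_eq, key]
  refine Iff.trans ?_ (h x X).symm
  constructor
  · rintro ⟨u, ⟨s, h1, h2⟩, h3⟩
    exact ⟨s, h1, fun z hz => h3 (h2 z hz)⟩
  · rintro ⟨s, h1, h2⟩
    obtain ⟨u, hu⟩ := exists_dset_eq (L (x, s))
    exact ⟨u, ⟨s, h1, fun z hz => (hu z).2 hz⟩, fun z hz => h2 z ((hu z).1 hz)⟩

theorem EOp.exists_index {F : Set ℕ → Set ℕ} (hF : EOp F) : ∃ e, ∀ X, PhiStd e X = F X := by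
  obtain ⟨W, hW, h⟩ := hF.exists_ce
  obtain ⟨e, rfl⟩ := hW.exists_index
  exact ⟨e, h⟩

theorem EOp.dRed {F : Set ℕ → Set ℕ} (hF : EOp F) {A B : MassPb}
    (h : ∀ ψ ∈ B, ∃ χ ∈ A, pgraph χ = F (pgraph ψ)) : DRed A B := by
  obtain ⟨W, hW, hWF⟩ := hF.exists_ce
  exact ⟨W, hW, by simpa only [hWF] using h⟩

theorem DRed.exists_eop {A B : MassPb} (h : DRed A B) :
    ∃ F, EOp F ∧ ∀ ψ ∈ B, ∃ χ ∈ A, pgraph χ = F (pgraph ψ) := by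
  obtain ⟨W, hW, h⟩ := h
  exact ⟨_, eop_enumOp hW, h⟩

/-! ### Operations on graphs -/

/-- The values at `0` of the relation coded by `X`. -/
def sHd (X : Set ℕ) : Set ℕ := {v | Nat.pair 0 v ∈ X}

/-- The shift of the relation coded by `X`; it undoes `pfCons`. -/
def sTl (X : Set ℕ) : Set ℕ := {z | Nat.pair (z.unpair.1 + 1) z.unpair.2 ∈ X}

/-- The even half of the relation coded by `X`. -/
def sEv (X : Set ℕ) : Set ℕ := {z | Nat.pair (2 * z.unpair.1) z.unpair.2 ∈ X}

/-- The odd half of the relation coded by `X`. -/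
def sOd (X : Set ℕ) : Set ℕ := {z | Nat.pair (2 * z.unpair.1 + 1) z.unpair.2 ∈ X}

/-- The graph-level version of `pfCons`, with a set `S` of values at `0`. -/
def sCons (S X : Set ℕ) : Set ℕ :=
  {z | (z.unpair.1 = 0 ∧ z.unpair.2 ∈ S) ∨
    (z.unpair.1 ≠ 0 ∧ Nat.pair (z.unpair.1 - 1) z.unpair.2 ∈ X)}

/-- The graph-level version of `pfAdd`. -/
def sAdd (X Y : Set ℕ) : Set ℕ :=
  {z | (z.unpair.1 % 2 = 0 ∧ Nat.pair (z.unpair.1 / 2) z.unpair.2 ∈ X) ∨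
    (z.unpair.1 % 2 ≠ 0 ∧ Nat.pair (z.unpair.1 / 2) z.unpair.2 ∈ Y)}

/-- Application of the operators with indices in `S` to `X`. -/
def sApp (S X : Set ℕ) : Set ℕ := {x | ∃ e, e ∈ S ∧ x ∈ PhiStd e X}

/-- Case distinction: `X` if `0 ∈ S`, together with `Y` if `1 ∈ S`. -/
def sIf (S X Y : Set ℕ) : Set ℕ := {x | (0 ∈ S ∧ x ∈ X) ∨ (1 ∈ S ∧ x ∈ Y)}

theorem mem_pgraph_pair (φ : ℕ →. ℕ) (x v : ℕ) : Nat.pair x v ∈ pgraph φ ↔ v ∈ φ x := by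
  simp [pgraph]

theorem pgraph_pfCons (i : ℕ) (φ : ℕ →. ℕ) : pgraph (pfCons i φ) = sCons {i} (pgraph φ) := by
  ext z
  obtain ⟨x, v, rfl⟩ : ∃ x v, z = Nat.pair x v := ⟨_, _, (Nat.pair_unpair z).symm⟩
  rw [mem_pgraph_pair]
  simp only [pfCons, sCons, Set.mem_ofPred_eq, Nat.unpair_pair, mem_pgraph_pair]
  by_cases h : x = 0 <;> simp [h]

theorem pgraph_pfAdd (φ ψ : ℕ →. ℕ) : pgraph (pfAdd φ ψ) = sAdd (pgraph φ) (pgraph ψ) := by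
  ext z
  obtain ⟨x, v, rfl⟩ : ∃ x v, z = Nat.pair x v := ⟨_, _, (Nat.pair_unpair z).symm⟩
  rw [mem_pgraph_pair]
  simp only [pfAdd, sAdd, Set.mem_ofPred_eq, Nat.unpair_pair, mem_pgraph_pair]
  by_cases h : x % 2 = 0 <;> simp [h]

theorem sHd_sCons (S X : Set ℕ) : sHd (sCons S X) = S := by
  ext z
  simp [sHd, sCons]

theorem sTl_sCons (S X : Set ℕ) : sTl (sCons S X) = X := by
  ext z
  simp [sTl, sCons]

theorem sEv_sAdd (X Y : Set ℕ) : sEv (sAdd X Y) = X := by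
  ext z
  simp [sEv, sAdd]

theorem sOd_sAdd (X Y : Set ℕ) : sOd (sAdd X Y) = Y := by
  ext z
  have h2 : (2 * z.unpair.1 + 1) / 2 = z.unpair.1 := by omega
  simp [sOd, sAdd, h2]

theorem sApp_singleton (e : ℕ) (X : Set ℕ) : sApp {e} X = PhiStd e X := by
  ext z
  simp [sApp]

theorem sIf_zero (X Y : Set ℕ) : sIf {0} X Y = X := by
  ext z
  simp [sIf]

theorem sIf_one (X Y : Set ℕ) : sIf {1} X Y = Y := by
  ext z
  simp [sIf]

theorem phi_mono (e : ℕ) {X Y : Set ℕ} (h : X ⊆ Y) : PhiStd e X ⊆ PhiStd e Y := by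
  rintro x ⟨u, hu, hX⟩
  exact ⟨u, hu, hX.trans h⟩

theorem sAdd_mono {X X' Y Y' : Set ℕ} (h : X ⊆ X') (h' : Y ⊆ Y') : sAdd X Y ⊆ sAdd X' Y' :=
  fun _ hz => hz.imp (fun k => ⟨k.1, h k.2⟩) (fun k => ⟨k.1, h' k.2⟩)

theorem eop_id : EOp (fun X => X) := EOpen.mem Primrec.id

theorem eop_const {S : Set ℕ} (hS : PrimrecPred (fun x => x ∈ S)) : EOp (fun _ => S) :=
  EOpen.pred hS

theorem eop_singleton (i : ℕ) : EOp (fun _ => {i}) :=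
  EOpen.pred (p := fun x => x = i) (PrimrecRel.comp Primrec.eq Primrec.id (Primrec.const i))

theorem EOp.comp {F G : Set ℕ → Set ℕ} (hF : EOp F) (hG : EOp G) : EOp (fun X => F (G X)) :=
  EOpen.subst (F := fun _ => G) hF (EOpen.comp hG Primrec.snd)

theorem EOp.preimage {F : Set ℕ → Set ℕ} (hF : EOp F) {g : ℕ → ℕ} (hg : Primrec g) :
    EOp (fun X => {x | g x ∈ F X}) :=
  EOpen.comp hF hg

theorem primrec_unpair_fst : Primrec (fun z : ℕ => z.unpair.1) :=
  Primrec.fst.comp Primrec.unpair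

theorem primrec_unpair_snd : Primrec (fun z : ℕ => z.unpair.2) :=
  Primrec.snd.comp Primrec.unpair

section

variable {F G H : Set ℕ → Set ℕ}

theorem EOp.hd (hF : EOp F) : EOp (fun X => sHd (F X)) :=
  hF.preimage (Primrec₂.natPair.comp (Primrec.const 0) Primrec.id)

theorem EOp.tl (hF : EOp F) : EOp (fun X => sTl (F X)) :=
  hF.preimage (Primrec₂.natPair.comp (Primrec.succ.comp primrec_unpair_fst) primrec_unpair_snd)

theorem EOp.ev (hF : EOp F) : EOp (fun X => sEv (F X)) :=
  hF.preimage (Primrec₂.natPair.comp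
    (Primrec.nat_mul.comp (Primrec.const 2) primrec_unpair_fst) primrec_unpair_snd)

theorem EOp.od (hF : EOp F) : EOp (fun X => sOd (F X)) :=
  hF.preimage (Primrec₂.natPair.comp (Primrec.succ.comp
    (Primrec.nat_mul.comp (Primrec.const 2) primrec_unpair_fst)) primrec_unpair_snd)

theorem EOp.cons (hF : EOp F) (hG : EOp G) : EOp (fun X => sCons (F X) (G X)) := by
  have h0 : PrimrecPred (fun z : ℕ => z.unpair.1 = 0) :=
    PrimrecRel.comp Primrec.eq primrec_unpair_fst (Primrec.const 0)
  exact ((EOpen.pred h0).and (EOpen.comp hF primrec_unpair_snd)).or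
    ((EOpen.pred h0.not).and (EOpen.comp hG (Primrec₂.natPair.comp
      (Primrec.nat_sub.comp primrec_unpair_fst (Primrec.const 1)) primrec_unpair_snd)))

theorem EOp.add (hF : EOp F) (hG : EOp G) : EOp (fun X => sAdd (F X) (G X)) := by
  have h0 : PrimrecPred (fun z : ℕ => z.unpair.1 % 2 = 0) :=
    PrimrecRel.comp Primrec.eq (Primrec.nat_mod.comp primrec_unpair_fst (Primrec.const 2))
      (Primrec.const 0)
  have hg : Primrec (fun z : ℕ => Nat.pair (z.unpair.1 / 2) z.unpair.2) :=
    Primrec₂.natPair.comp (Primrec.nat_div.comp primrec_unpair_fst (Primrec.const 2))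
      primrec_unpair_snd
  exact ((EOpen.pred h0).and (EOpen.comp hF hg)).or
    ((EOpen.pred h0.not).and (EOpen.comp hG hg))

theorem EOp.app (hF : EOp F) (hG : EOp G) : EOp (fun X => sApp (F X) (G X)) := by
  have h1 : EOpen (fun (q : ℕ × ℕ) X => q.2 ∈ F X) := EOpen.comp hF Primrec.snd
  have h2 : EOpen (fun (q : ℕ × ℕ) X => q.1 ∈ PhiStd q.2 (G X)) :=
    EOpen.subst (F := fun _ => G)
      (eopen_phi.comp (Primrec.pair Primrec.snd Primrec.fst)) (EOpen.comp hG Primrec.snd)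
  exact (h1.and h2).exist

theorem EOp.cases (hF : EOp F) (hG : EOp G) (hH : EOp H) :
    EOp (fun X => sIf (F X) (G X) (H X)) :=
  ((EOpen.comp hF (Primrec.const 0)).and hG).or ((EOpen.comp hF (Primrec.const 1)).and hH)

end

/-! ### Reducibility and congruence -/

theorem DRed.refl (A : MassPb) : DRed A A :=
  eop_id.dRed fun ψ hψ => ⟨ψ, hψ, rfl⟩

theorem DRed.trans {A B C : MassPb} (h₁ : DRed A B) (h₂ : DRed B C) : DRed A C := by
  obtain ⟨F, hF, h₁⟩ := h₁.exists_eop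
  obtain ⟨G, hG, h₂⟩ := h₂.exists_eop
  refine (hF.comp hG).dRed fun ψ hψ => ?_
  obtain ⟨χ, hχ, e⟩ := h₂ ψ hψ
  obtain ⟨θ, hθ, e'⟩ := h₁ χ hχ
  exact ⟨θ, hθ, by rw [e', e]⟩

theorem DEq.refl (A : MassPb) : DEq A A := ⟨DRed.refl A, DRed.refl A⟩

theorem DEq.trans {A B C : MassPb} (h₁ : DEq A B) (h₂ : DEq B C) : DEq A C :=
  ⟨h₁.1.trans h₂.1, h₂.2.trans h₁.2⟩

theorem DRed.wedge {A A' B B' : MassPb} (hA : DRed A A') (hB : DRed B B') :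
    DRed (mpWedge A B) (mpWedge A' B') := by
  obtain ⟨F, hF, hA⟩ := hA.exists_eop
  obtain ⟨G, hG, hB⟩ := hB.exists_eop
  refine (eop_id.hd.cons (eop_id.hd.cases (hF.comp eop_id.tl) (hG.comp eop_id.tl))).dRed ?_
  rintro _ (⟨ψ, hψ, rfl⟩ | ⟨ψ, hψ, rfl⟩)
  · obtain ⟨χ, hχ, e⟩ := hA ψ hψ
    refine ⟨_, Or.inl ⟨χ, hχ, rfl⟩, ?_⟩
    simp only [pgraph_pfCons, sHd_sCons, sTl_sCons, sIf_zero, e]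
  · obtain ⟨χ, hχ, e⟩ := hB ψ hψ
    refine ⟨_, Or.inr ⟨χ, hχ, rfl⟩, ?_⟩
    simp only [pgraph_pfCons, sHd_sCons, sTl_sCons, sIf_one, e]

theorem DRed.plus {A A' B B' : MassPb} (hA : DRed A A') (hB : DRed B B') :
    DRed (mpPlus A B) (mpPlus A' B') := by
  obtain ⟨F, hF, hA⟩ := hA.exists_eop
  obtain ⟨G, hG, hB⟩ := hB.exists_eop
  refine ((hF.comp eop_id.ev).add (hG.comp eop_id.od)).dRed ?_
  rintro _ ⟨φ, hφ, ψ, hψ, rfl⟩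
  obtain ⟨χ, hχ, e⟩ := hA φ hφ
  obtain ⟨θ, hθ, e'⟩ := hB ψ hψ
  refine ⟨_, ⟨χ, hχ, θ, hθ, rfl⟩, ?_⟩
  simp only [pgraph_pfAdd, sEv_sAdd, sOd_sAdd, e, e']

theorem DEq.wedge {A A' B B' : MassPb} (hA : DEq A A') (hB : DEq B B') :
    DEq (mpWedge A B) (mpWedge A' B') :=
  ⟨hA.1.wedge hB.1, hA.2.wedge hB.2⟩

theorem DEq.plus {A A' B B' : MassPb} (hA : DEq A A') (hB : DEq B B') :
    DEq (mpPlus A B) (mpPlus A' B') :=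
  ⟨hA.1.plus hB.1, hA.2.plus hB.2⟩

/-! ### Arrows out of a meet -/

/-- `(A ∧ A') → B ≡ (A → B) ⊕ (A' → B)`, for arbitrary mass problems. -/
theorem arrow_wedge_left (A A' B : MassPb) :
    DEq (mpArrow (mpWedge A A') B) (mpPlus (mpArrow A B) (mpArrow A' B)) := by
  constructor
  · -- The index `e₀` reads the tag of its second argument and runs the program it selects.
    obtain ⟨e₀, he₀⟩ := (eop_id.od.hd.cases
      (eop_id.ev.ev.hd.app (eop_id.ev.ev.tl.add eop_id.od.tl))
      (eop_id.ev.od.hd.app (eop_id.ev.od.tl.add eop_id.od.tl))).exists_index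
    refine ((eop_singleton e₀).cons eop_id).dRed ?_
    rintro _ ⟨_, ⟨e, φ, rfl, h⟩, _, ⟨e', φ', rfl, h'⟩, rfl⟩
    refine ⟨_, ⟨e₀, _, rfl, ?_⟩, pgraph_pfCons _ _⟩
    rintro _ (⟨ψ, hψ, rfl⟩ | ⟨ψ, hψ, rfl⟩)
    · obtain ⟨χ, hχ, hc⟩ := h ψ hψ
      refine ⟨χ, hχ, ?_⟩
      rw [hc, he₀]
      simp only [pgraph_pfAdd, pgraph_pfCons, sEv_sAdd, sOd_sAdd, sHd_sCons, sTl_sCons, sIf_zero,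
        sApp_singleton]
    · obtain ⟨χ, hχ, hc⟩ := h' ψ hψ
      refine ⟨χ, hχ, ?_⟩
      rw [hc, he₀]
      simp only [pgraph_pfAdd, pgraph_pfCons, sEv_sAdd, sOd_sAdd, sHd_sCons, sTl_sCons, sIf_one,
        sApp_singleton]
  · -- The indices `d 0`, `d 1` prefix their second argument with the corresponding tag.
    have hd : ∀ i : ℕ, ∃ e, ∀ X, PhiStd e X =
        sApp (sHd (sEv X)) (sAdd (sTl (sEv X)) (sCons {i} (sOd X))) := fun i =>
      (eop_id.ev.hd.app (eop_id.ev.tl.add ((eop_singleton i).cons eop_id.od))).exists_index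
    choose d hd using hd
    refine (((eop_singleton (d 0)).cons eop_id).add ((eop_singleton (d 1)).cons eop_id)).dRed ?_
    rintro _ ⟨e, φ, rfl, h⟩
    refine ⟨_, ⟨_, ⟨d 0, pfCons e φ, rfl, fun ψ hψ => ?_⟩,
      _, ⟨d 1, pfCons e φ, rfl, fun ψ hψ => ?_⟩, rfl⟩, ?_⟩
    · obtain ⟨χ, hχ, hc⟩ := h _ (Or.inl ⟨ψ, hψ, rfl⟩)
      refine ⟨χ, hχ, ?_⟩
      rw [hc, hd]
      simp only [pgraph_pfAdd, pgraph_pfCons, sEv_sAdd, sOd_sAdd, sHd_sCons, sTl_sCons,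
        sApp_singleton]
    · obtain ⟨χ, hχ, hc⟩ := h _ (Or.inr ⟨ψ, hψ, rfl⟩)
      refine ⟨χ, hχ, ?_⟩
      rw [hc, hd]
      simp only [pgraph_pfAdd, pgraph_pfCons, sEv_sAdd, sOd_sAdd, sHd_sCons, sTl_sCons,
        sApp_singleton]
    · simp only [pgraph_pfAdd, pgraph_pfCons]

/-! ### Arrows into a meet -/

/-- The constantly zero function. -/
def zeroFn : ℕ →. ℕ := fun _ => Part.some 0

/-- The function that agrees with `σ` below `N` and, from `N` on, takes the value `0` exactly
at the positions `N + z` with `z ∈ graph ψ` (and no other value). -/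
def pad (N : ℕ) (σ ψ : ℕ →. ℕ) : ℕ →. ℕ := fun n =>
  if n < N then σ n else Part.assert (n - N ∈ pgraph ψ) fun _ => Part.some 0

theorem mem_pad {N : ℕ} {σ ψ : ℕ →. ℕ} {n v : ℕ} :
    v ∈ pad N σ ψ n ↔ (n < N ∧ v ∈ σ n) ∨ (N ≤ n ∧ n - N ∈ pgraph ψ ∧ v = 0) := by
  unfold pad
  by_cases h : n < N
  · simp [h, Nat.not_le.2 h]
  · simp [h, Nat.not_lt.1 h, Part.mem_assert_iff]

theorem pad_mem {A : MassPb} (hA : UpClosedE A) {ψ : ℕ →. ℕ} (hψ : ψ ∈ A) (N : ℕ)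
    (σ : ℕ →. ℕ) : pad N σ ψ ∈ A := by
  refine hA ψ _ hψ ?_
  have hF : EOp (fun X => {z | Nat.pair (N + z) 0 ∈ X}) :=
    eop_id.preimage (Primrec₂.natPair.comp
      (Primrec.nat_add.comp (Primrec.const N) Primrec.id) (Primrec.const 0))
  obtain ⟨W, hW, h⟩ := hF.exists_ce
  refine ⟨W, hW, ?_⟩
  rw [h]
  ext z
  simp [mem_pgraph_pair, mem_pad]

/-- The use principle: `Φ_e(φ ⊕ σ)` only uses a finite part of `σ`, so `σ` may be changed
arbitrarily above some bound. -/
theorem phi_use {e x : ℕ} {φ σ : ℕ →. ℕ} (h : x ∈ PhiStd e (pgraph (pfAdd φ σ))) :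
    ∃ N, ∀ M, N ≤ M → ∀ ψ, x ∈ PhiStd e (pgraph (pfAdd φ (pad M σ ψ))) := by
  obtain ⟨u, hu, hsub⟩ := h
  refine ⟨u, fun M hM ψ => ⟨u, hu, fun z hz => ?_⟩⟩
  have hzM : z < M := lt_of_lt_of_le (lt_of_mem_dset hz) hM
  have hz' := hsub hz
  rw [pgraph_pfAdd] at hz' ⊢
  refine hz'.imp id fun k => ⟨k.1, ?_⟩
  rw [mem_pgraph_pair, mem_pad]
  have h1 : z.unpair.1 / 2 < M :=
    lt_of_le_of_lt (Nat.div_le_self _ _) (lt_of_le_of_lt (Nat.unpair_left_le z) hzM)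
  exact Or.inl ⟨h1, (mem_pgraph_pair _ _ _).1 k.2⟩

theorem pgraph_mono {φ ψ : ℕ →. ℕ} (h : ∀ n v, v ∈ φ n → v ∈ ψ n) : pgraph φ ⊆ pgraph ψ :=
  fun _ hz => h _ _ hz

/-- If `A` is Dyment–Muchnik and `Φ_e(φ ⊕ ψ)` has a unique value at `0` for all `ψ ∈ A`, then any
two values at `0`, obtained from arbitrary second arguments `σ` and `σ'`, coincide: copy some
`ψ ∈ A` beyond the uses of both computations. Without prefix, this copy already forces a value,
and it persists when the relevant part of `σ` or of `σ'` is put in front of the copy. -/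
theorem head_unique {A : MassPb} (hA : DMProblem A) {e : ℕ} {φ : ℕ →. ℕ}
    (h : ∀ ψ ∈ A, ∃ j, sHd (PhiStd e (pgraph (pfAdd φ ψ))) = {j}) {σ σ' : ℕ →. ℕ} {v v' : ℕ}
    (hv : v ∈ sHd (PhiStd e (pgraph (pfAdd φ σ))))
    (hv' : v' ∈ sHd (PhiStd e (pgraph (pfAdd φ σ')))) : v = v' := by
  obtain ⟨⟨ψ, hψ⟩, hup⟩ := hA
  obtain ⟨N, hN⟩ := phi_use hv
  obtain ⟨N', hN'⟩ := phi_use hv'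
  set M := max N N'
  obtain ⟨j, hj⟩ := h _ (pad_mem hup hψ M (fun _ => Part.none))
  have key : ∀ (τ : ℕ →. ℕ) (w : ℕ),
      w ∈ sHd (PhiStd e (pgraph (pfAdd φ (pad M τ ψ)))) → w = j := by
    intro τ w hw
    obtain ⟨i, hi⟩ := h _ (pad_mem hup hψ M τ)
    have hj' : j ∈ sHd (PhiStd e (pgraph (pfAdd φ (pad M τ ψ)))) := by
      have hmem : j ∈ sHd (PhiStd e (pgraph (pfAdd φ (pad M (fun _ => Part.none) ψ)))) := by
        rw [hj]
        rfl
      refine phi_mono e ?_ hmem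
      rw [pgraph_pfAdd, pgraph_pfAdd]
      refine sAdd_mono subset_rfl (pgraph_mono fun n x hx => ?_)
      exact mem_pad.2 ((mem_pad.1 hx).imp (fun k => absurd k.2 (Part.notMem_none x)) id)
    rw [hi] at hw hj'
    exact hw.trans hj'.symm
  exact (key σ v (hN M (le_max_left _ _) ψ)).trans (key σ' v' (hN' M (le_max_right _ _) ψ)).symm

/-- `A → (B ∧ B') ≡ (A → B) ∧ (A → B')` if `A` is Dyment–Muchnik. -/
theorem arrow_wedge_right {A : MassPb} (hA : DMProblem A) (B B' : MassPb) :
    DEq (mpArrow A (mpWedge B B')) (mpWedge (mpArrow A B) (mpArrow A B')) := by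
  constructor
  · obtain ⟨e₀, he₀⟩ := (eop_id.ev.hd.cons
      (eop_id.ev.tl.hd.app (eop_id.ev.tl.tl.add eop_id.od))).exists_index
    refine ((eop_singleton e₀).cons eop_id).dRed ?_
    rintro _ (⟨_, ⟨e, φ, rfl, h⟩, rfl⟩ | ⟨_, ⟨e, φ, rfl, h⟩, rfl⟩)
    · refine ⟨_, ⟨e₀, _, rfl, fun ψ hψ => ?_⟩, pgraph_pfCons _ _⟩
      obtain ⟨χ, hχ, hc⟩ := h ψ hψ
      refine ⟨_, Or.inl ⟨χ, hχ, rfl⟩, ?_⟩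
      rw [he₀, pgraph_pfCons, hc]
      simp only [pgraph_pfAdd, pgraph_pfCons, sEv_sAdd, sOd_sAdd, sHd_sCons, sTl_sCons,
        sApp_singleton]
    · refine ⟨_, ⟨e₀, _, rfl, fun ψ hψ => ?_⟩, pgraph_pfCons _ _⟩
      obtain ⟨χ, hχ, hc⟩ := h ψ hψ
      refine ⟨_, Or.inr ⟨χ, hχ, rfl⟩, ?_⟩
      rw [he₀, pgraph_pfCons, hc]
      simp only [pgraph_pfAdd, pgraph_pfCons, sEv_sAdd, sOd_sAdd, sHd_sCons, sTl_sCons,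
        sApp_singleton]
  · obtain ⟨e₁, he₁⟩ := (eop_id.ev.hd.app (eop_id.ev.tl.add eop_id.od)).tl.exists_index
    have hz : EOp (fun _ => pgraph zeroFn) := by
      refine eop_const ((PrimrecRel.comp Primrec.eq primrec_unpair_snd
        (Primrec.const 0)).of_eq fun z => ?_)
      simp [pgraph, zeroFn]
    -- The tag is the value at `0` of `Φ_e(φ ⊕ zeroFn)`.
    refine ((eop_id.hd.app (eop_id.tl.add hz)).hd.cons
      ((eop_singleton e₁).cons eop_id)).dRed ?_
    rintro _ ⟨e, φ, rfl, h⟩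
    have hval : ∀ ψ ∈ A, ∃ j, sHd (PhiStd e (pgraph (pfAdd φ ψ))) = {j} := by
      intro ψ hψ
      obtain ⟨_, ⟨χ, -, rfl⟩ | ⟨χ, -, rfl⟩, hc⟩ := h ψ hψ
      · exact ⟨0, by rw [← hc, pgraph_pfCons, sHd_sCons]⟩
      · exact ⟨1, by rw [← hc, pgraph_pfCons, sHd_sCons]⟩
    obtain ⟨j, hj⟩ : ∃ j, j ∈ sHd (PhiStd e (pgraph (pfAdd φ zeroFn))) := by
      obtain ⟨ψ, hψ⟩ := hA.1
      obtain ⟨j, hj⟩ := hval _ (pad_mem hA.2 hψ 0 zeroFn)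
      have hmem : j ∈ sHd (PhiStd e (pgraph (pfAdd φ (pad 0 zeroFn ψ)))) := by
        rw [hj]
        rfl
      refine ⟨j, phi_mono e ?_ hmem⟩
      rw [pgraph_pfAdd, pgraph_pfAdd]
      refine sAdd_mono subset_rfl (pgraph_mono fun n x hx => ?_)
      rcases mem_pad.1 hx with k | k
      · exact k.2
      · simp [zeroFn, k.2.2]
    have hzero : sHd (PhiStd e (pgraph (pfAdd φ zeroFn))) = {j} :=
      Set.eq_singleton_iff_unique_mem.2 ⟨hj, fun v hv => head_unique hA hval hv hj⟩
    have hout : ∀ B'' : MassPb, (∀ ψ ∈ A, ∃ χ ∈ B'', pgraph (pfCons j χ) =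
          PhiStd e (pgraph (pfAdd φ ψ))) → pfCons e₁ (pfCons e φ) ∈ mpArrow A B'' := by
      intro B'' hB
      refine ⟨e₁, _, rfl, fun ψ hψ => ?_⟩
      obtain ⟨χ, hχ, hc⟩ := hB ψ hψ
      refine ⟨χ, hχ, ?_⟩
      rw [he₁]
      simp only [pgraph_pfAdd, pgraph_pfCons, sEv_sAdd, sOd_sAdd, sHd_sCons, sTl_sCons,
        sApp_singleton] at hc ⊢
      rw [← hc, sTl_sCons]
    have hgraph : pgraph (pfCons j (pfCons e₁ (pfCons e φ))) =
        sCons (sHd (sApp (sHd (pgraph (pfCons e φ)))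
          (sAdd (sTl (pgraph (pfCons e φ))) (pgraph zeroFn))))
          (sCons {e₁} (pgraph (pfCons e φ))) := by
      rw [pgraph_pfAdd] at hzero
      simp only [pgraph_pfCons, sHd_sCons, sTl_sCons, sApp_singleton, hzero]
    -- All values of the operator carry the tag `j`.
    have htag : ∀ ψ ∈ A, ∀ i χ, pgraph (pfCons i χ) = PhiStd e (pgraph (pfAdd φ ψ)) → i = j := by
      intro ψ hψ i χ hc
      refine head_unique hA hval (σ := ψ) (σ' := zeroFn) ?_ hj
      rw [← hc, pgraph_pfCons, sHd_sCons]
      rfl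
    obtain ⟨ψ₀, hψ₀⟩ := hA.1
    obtain ⟨_, ⟨χ₀, -, rfl⟩ | ⟨χ₀, -, rfl⟩, hc₀⟩ := h ψ₀ hψ₀
    · obtain rfl := htag ψ₀ hψ₀ 0 χ₀ hc₀
      refine ⟨_, Or.inl ⟨_, hout B fun ψ hψ => ?_, rfl⟩, hgraph⟩
      obtain ⟨_, ⟨χ, hχ, rfl⟩ | ⟨χ, hχ, rfl⟩, hc⟩ := h ψ hψ
      · exact ⟨χ, hχ, hc⟩
      · exact absurd (htag ψ hψ 1 χ hc) one_ne_zero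
    · obtain rfl := htag ψ₀ hψ₀ 1 χ₀ hc₀
      refine ⟨_, Or.inr ⟨_, hout B' fun ψ hψ => ?_, rfl⟩, hgraph⟩
      obtain ⟨_, ⟨χ, hχ, rfl⟩ | ⟨χ, hχ, rfl⟩, hc⟩ := h ψ hψ
      · exact absurd (htag ψ hψ 0 χ hc) zero_ne_one
      · exact ⟨χ, hχ, hc⟩

/-! ### Iterated meets and joins -/

theorem arrow_bigWedge_right {A : MassPb} (hA : DMProblem A) (n : ℕ)
    (B : Fin (n + 1) → MassPb) :
    DEq (mpArrow A (bigWedge n B)) (bigWedge n (fun j => mpArrow A (B j))) := by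
  induction n with
  | zero => exact DEq.refl _
  | succ n ih =>
    exact (arrow_wedge_right hA _ _).trans ((DEq.refl _).wedge (ih fun i => B i.succ))

theorem arrow_bigWedge_left (m : ℕ) (A : Fin (m + 1) → MassPb) (B : MassPb) :
    DEq (mpArrow (bigWedge m A) B) (bigPlus m (fun i => mpArrow (A i) B)) := by
  induction m with
  | zero => exact DEq.refl _
  | succ m ih =>
    exact (arrow_wedge_left _ _ _).trans ((DEq.refl _).plus (ih fun i => A i.succ))

theorem DEq.bigPlus (m : ℕ) {C D : Fin (m + 1) → MassPb} (h : ∀ i, DEq (C i) (D i)) :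
    DEq (bigPlus m C) (bigPlus m D) := by
  induction m with
  | zero => exact h 0
  | succ m ih => exact (h 0).plus (ih fun i => h i.succ)

/-- For Dyment–Muchnik problems `A₁,…,A_m` and `B₁,…,B_n`:
`(A₁∧⋯∧A_m) → (B₁∧⋯∧B_n) ≡_D C₁ ⊕ ⋯ ⊕ C_m` where
`C_i = (A_i→B₁)∧⋯∧(A_i→B_n)`. -/
theorem dm_arrow_meet_to_join_of_meets (m n : ℕ)
    (A : Fin (m + 1) → MassPb) (B : Fin (n + 1) → MassPb)
    (hA : ∀ i, DMProblem (A i)) (hB : ∀ j, DMProblem (B j)) :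
    DEq (mpArrow (bigWedge m A) (bigWedge n B))
        (bigPlus m (fun i => bigWedge n (fun j => mpArrow (A i) (B j)))) := by
  exact (arrow_bigWedge_left m A _).trans
    (DEq.bigPlus m fun i => arrow_bigWedge_right (hA i) n B)
end

section
/- Let g : ℕ → ℕ be a computably e-independent total function. Then there exists a total function h : ℕ → ℕ such that g ⊕ h is computably e-independent, where g ⊕ h is the total function whose 2i-th column is g^{[i]} and whose (2i+1)-th column is h^{[i]}. -/
/-- The graph of a total function, as a set of codes of pairs. -/
def tgraph (f : ℕ → ℕ) : Set ℕ := {n | f n.unpair.1 = n.unpair.2}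

/-- Enumeration reducibility between total functions. -/
def teRed (f g : ℕ → ℕ) : Prop := EnumRed (tgraph f) (tgraph g)

/-- The `i`-th column of a total function: `g^{[i]}(x) = g⟨i,x⟩`. -/
def col (g : ℕ → ℕ) (i : ℕ) : ℕ → ℕ := fun x => g (Nat.pair i x)

open Classical in
/-- `⊕_{j∈I} g^{[j]}`: the total function agreeing with `g` on columns in `I`
and constantly `0` on the other columns. -/
noncomputable def restrCols (g : ℕ → ℕ) (I : Set ℕ) : ℕ → ℕ :=
  fun n => if n.unpair.1 ∈ I then g n else 0

/-- `g` is computably e-independent if no column is enumeration reducible to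
the join of the remaining columns. -/
def CompIndep (g : ℕ → ℕ) : Prop :=
  ∀ i, ¬ teRed (col g i) (restrCols g {j | j ≠ i})

/-- `g ⊕ h`: the total function whose `2i`-th column is `g^{[i]}` and whose
`(2i+1)`-th column is `h^{[i]}`. -/
def interleave (g h : ℕ → ℕ) : ℕ → ℕ := fun n =>
  if n.unpair.1 % 2 = 0 then g (Nat.pair (n.unpair.1 / 2) n.unpair.2)
  else h (Nat.pair (n.unpair.1 / 2) n.unpair.2)

/-! ### Computably enumerable sets -/

theorem ce_iff_code {W : Set ℕ} :
    CE W ↔ ∃ c : Nat.Partrec.Code, W = {x | (c.eval x).Dom} := by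
  constructor
  · rintro ⟨f, hf, rfl⟩
    obtain ⟨c, rfl⟩ := Nat.Partrec.Code.exists_code.1 (Partrec.nat_iff.1 hf)
    exact ⟨c, rfl⟩
  · rintro ⟨c, rfl⟩
    exact ⟨c.eval, Partrec.nat_iff.2 (Nat.Partrec.Code.exists_code.2 ⟨c, rfl⟩), rfl⟩

/-- The projection of a primitive recursive relation is c.e. -/
theorem ce_of_exists {β : Type} [Primcodable β] {Q : ℕ → β → Prop} (hQ : PrimrecRel Q) :
    CE {w | ∃ t, Q w t} := by
  classical
  let F : ℕ → ℕ → Option β := fun w n => (Encodable.decode (α := β) n).bind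
    fun b => Option.guard (fun b => Q w b) b
  have hF : Primrec₂ F := by
    refine Primrec.option_bind (Primrec.decode.comp Primrec.snd) ?_
    refine Primrec.option_guard (p := fun (a : (ℕ × ℕ) × β) b => Q a.1.1 b) ?_ Primrec.snd
    exact hQ.comp (Primrec.fst.comp (Primrec.fst.comp Primrec.fst)) Primrec.snd
  have hE : Primrec₂ fun w n => (F w n).map (fun _ => 0) :=
    Primrec.option_map hF (Primrec.const 0).to₂
  refine ⟨fun w => Nat.rfindOpt fun n => (F w n).map (fun _ => 0),
    Partrec.rfindOpt hE.to_comp, ?_⟩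
  ext w
  change _ ↔ (Nat.rfindOpt _).Dom
  rw [Nat.rfindOpt_dom]
  constructor
  · rintro ⟨t, ht⟩
    exact ⟨Encodable.encode t, 0, by simp [F, Option.guard, ht]⟩
  · rintro ⟨n, a, ha⟩
    simp only [F, Option.mem_def, Option.map_eq_some_iff, Option.bind_eq_some_iff,
      Option.guard_eq_some_iff] at ha
    obtain ⟨b, ⟨t, -, rfl, hb⟩, -⟩ := ha
    exact ⟨t, by simpa using hb⟩

theorem primrec_testBit : Primrec₂ Nat.testBit := by
  have hpow : Primrec₂ ((· ^ ·) : ℕ → ℕ → ℕ) := Primrec₂.unpaired'.1 Nat.Primrec.pow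
  have : PrimrecRel fun m k : ℕ => m / 2 ^ k % 2 = 1 :=
    Primrec.eq.comp (Primrec.nat_mod.comp (Primrec.nat_div.comp Primrec.fst
      (hpow.comp (Primrec.const 2) Primrec.snd)) (Primrec.const 2)) (Primrec.const 1)
  exact this.decide.of_eq fun m k => Nat.testBit_eq_decide_div_mod_eq.symm

/-! ### The reduction for the columns of `g` -/

/-- The code `⟨⟨c, y⟩, z⟩` of a value `z` at `⟨c, y⟩` becomes `⟨⟨c / 2, y⟩, z⟩`. -/
def halfCode (k : ℕ) : ℕ :=
  Nat.pair (Nat.pair (k.unpair.1.unpair.1 / 2) k.unpair.1.unpair.2) k.unpair.2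

/-- The oracle question `k` about `g ⊕ h` is answered positively by the finite set `D_v` when it
concerns `g`, and by the finite string `s` when it concerns `h`. -/
def Answers (v : ℕ) (s : List ℕ) (k : ℕ) : Prop :=
  (k.unpair.1.unpair.1 % 2 = 0 ∧ v.testBit (halfCode k) = true) ∨
  (k.unpair.1.unpair.1 % 2 = 1 ∧ s[(halfCode k).unpair.1]? = some k.unpair.2)

theorem primrec_halfCode : Primrec halfCode := by
  have h1 : Primrec fun k : ℕ => k.unpair.1 := Primrec.fst.comp Primrec.unpair
  have h2 : Primrec fun k : ℕ => k.unpair.2 := Primrec.snd.comp Primrec.unpair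
  exact Primrec₂.natPair.comp (Primrec₂.natPair.comp
    (Primrec.nat_div.comp (h1.comp h1) (Primrec.const 2)) (h2.comp h1)) h2

theorem primrec_answers : PrimrecRel fun (k : ℕ) (p : ℕ × List ℕ) => Answers p.1 p.2 k := by
  have h1 : Primrec fun k : ℕ => k.unpair.1 := Primrec.fst.comp Primrec.unpair
  have h2 : Primrec fun k : ℕ => k.unpair.2 := Primrec.snd.comp Primrec.unpair
  have hc : Primrec fun q : ℕ × (ℕ × List ℕ) => q.1.unpair.1.unpair.1 % 2 :=
    Primrec.nat_mod.comp ((h1.comp h1).comp Primrec.fst) (Primrec.const 2)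
  have hh : Primrec fun q : ℕ × (ℕ × List ℕ) => halfCode q.1 := primrec_halfCode.comp Primrec.fst
  refine PrimrecPred.or (PrimrecPred.and ?_ ?_) (PrimrecPred.and ?_ ?_)
  · exact Primrec.eq.comp hc (Primrec.const 0)
  · exact Primrec.eq.comp (primrec_testBit.comp (Primrec.fst.comp Primrec.snd) hh)
      (Primrec.const true)
  · exact Primrec.eq.comp hc (Primrec.const 1)
  · exact Primrec.eq.comp (Primrec.list_getElem?.comp (Primrec.snd.comp Primrec.snd) (h1.comp hh))
      (Primrec.option_some.comp (h2.comp Primrec.fst))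

/-- The axioms `⟨x, v⟩` obtained from axioms `⟨x, u⟩ ∈ W` by letting `D_v` and some finite
extension of the string `σ` answer all questions in `D_u`. -/
def evenReduction (W : Set ℕ) (σ : List ℕ) : Set ℕ :=
  {w | ∃ u s, Nat.pair w.unpair.1 u ∈ W ∧ ∀ k ∈ Dset u, Answers w.unpair.2 (σ ++ s) k}

theorem lt_of_mem_Dset {u k : ℕ} (h : k ∈ Dset u) : k < u :=
  lt_of_lt_of_le Nat.lt_two_pow_self (Nat.ge_two_pow_of_testBit h)

theorem ce_evenReduction {W : Set ℕ} (hW : CE W) (σ : List ℕ) : CE (evenReduction W σ) := by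
  obtain ⟨c, rfl⟩ := ce_iff_code.1 hW
  -- A witness `(u, s, n)` also carries a step bound `n` for the computation of `c`.
  let Q : ℕ → ℕ × List ℕ × ℕ → Prop := fun w t =>
    (Nat.Partrec.Code.evaln t.2.2 c (Nat.pair w.unpair.1 t.1)).isSome = true ∧
      ∀ k ∈ List.range t.1, ¬ (t.1.testBit k = true) ∨ Answers w.unpair.2 (σ ++ t.2.1) k
  have hQ : PrimrecRel Q := by
    have h1 : Primrec fun k : ℕ => k.unpair.1 := Primrec.fst.comp Primrec.unpair
    have h2 : Primrec fun k : ℕ => k.unpair.2 := Primrec.snd.comp Primrec.unpair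
    have hu : Primrec fun q : ℕ × (ℕ × List ℕ × ℕ) => q.2.1 := Primrec.fst.comp Primrec.snd
    have hs : Primrec fun q : ℕ × (ℕ × List ℕ × ℕ) => q.2.2.1 :=
      Primrec.fst.comp (Primrec.snd.comp Primrec.snd)
    have hn : Primrec fun q : ℕ × (ℕ × List ℕ × ℕ) => q.2.2.2 :=
      Primrec.snd.comp (Primrec.snd.comp Primrec.snd)
    refine PrimrecPred.and ?_ ?_
    · refine Primrec.eq.comp (Primrec.option_isSome.comp ?_) (Primrec.const true)
      exact Nat.Partrec.Code.primrec_evaln.comp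
        (Primrec.pair (Primrec.pair hn (Primrec.const c))
          (Primrec₂.natPair.comp (h1.comp Primrec.fst) hu))
    · have hR : PrimrecRel fun (k : ℕ) (p : ℕ × ℕ × List ℕ) =>
          ¬ (p.1.testBit k = true) ∨ Answers p.2.1 p.2.2 k := by
        refine PrimrecPred.or (PrimrecPred.not ?_) ?_
        · exact Primrec.eq.comp (primrec_testBit.comp (Primrec.fst.comp Primrec.snd) Primrec.fst)
            (Primrec.const true)
        · exact primrec_answers.comp Primrec.fst (Primrec.snd.comp Primrec.snd)
      exact hR.forall_mem_list.comp (Primrec.list_range.comp hu)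
        (Primrec.pair hu (Primrec.pair (h2.comp Primrec.fst)
          (Primrec.list_append.comp (Primrec.const σ) hs)))
  convert ce_of_exists hQ using 1
  ext w
  simp only [evenReduction, Set.mem_ofPred_eq, Q, Prod.exists]
  constructor
  · rintro ⟨u, s, hu, hk⟩
    obtain ⟨a, ha⟩ := Part.dom_iff_mem.1 hu
    obtain ⟨n, hn⟩ := Nat.Partrec.Code.evaln_complete.1 ha
    refine ⟨u, s, n, Option.isSome_iff_exists.2 ⟨a, hn⟩, fun k _ => ?_⟩
    by_cases hb : u.testBit k = true
    · exact Or.inr (hk k hb)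
    · exact Or.inl hb
  · rintro ⟨u, s, n, hn, hk⟩
    obtain ⟨a, ha⟩ := Option.isSome_iff_exists.1 hn
    refine ⟨u, s, Part.dom_iff_mem.2 ⟨a, Nat.Partrec.Code.evaln_sound ha⟩, fun k hb => ?_⟩
    exact (hk k (List.mem_range.2 (lt_of_mem_Dset hb))).resolve_left (not_not.2 hb)

theorem nat_pair_mono_left {a b : ℕ} (c : ℕ) (h : a ≤ b) : Nat.pair a c ≤ Nat.pair b c :=
  (StrictMono.monotone fun _ _ hab => Nat.pair_lt_pair_left c hab) h

theorem halfCode_fst_le (k : ℕ) : (halfCode k).unpair.1 ≤ k := by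
  simp only [halfCode, Nat.unpair_pair]
  calc _ ≤ Nat.pair k.unpair.1.unpair.1 k.unpair.1.unpair.2 :=
        nat_pair_mono_left _ (Nat.div_le_self _ _)
    _ = k.unpair.1 := Nat.pair_unpair _
    _ ≤ k := Nat.unpair_left_le k

theorem halfCode_le (k : ℕ) : halfCode k ≤ k := by
  calc halfCode k ≤ Nat.pair k.unpair.1 k.unpair.2 := by
        refine nat_pair_mono_left _ ?_
        calc _ ≤ Nat.pair k.unpair.1.unpair.1 k.unpair.1.unpair.2 :=
              nat_pair_mono_left _ (Nat.div_le_self _ _)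
          _ = k.unpair.1 := Nat.pair_unpair _
    _ = k := Nat.pair_unpair _

/-- The graph of `g ⊕ h` without column `2i`. -/
theorem mem_oracle_even (g h : ℕ → ℕ) (i k : ℕ) :
    k ∈ tgraph (restrCols (interleave g h) {j | j ≠ 2 * i}) ↔
      (k.unpair.1.unpair.1 % 2 = 0 ∧ halfCode k ∈ tgraph (restrCols g {j | j ≠ i})) ∨
      (k.unpair.1.unpair.1 % 2 = 1 ∧ h (halfCode k).unpair.1 = k.unpair.2) := by
  rcases Nat.mod_two_eq_zero_or_one k.unpair.1.unpair.1 with hc | hc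
  · have : k.unpair.1.unpair.1 = 2 * i ↔ k.unpair.1.unpair.1 / 2 = i := by omega
    simp [tgraph, restrCols, interleave, halfCode, hc, this]
  · have : k.unpair.1.unpair.1 ≠ 2 * i := by omega
    simp [tgraph, restrCols, interleave, halfCode, hc, this]

theorem even_teRed {g h : ℕ → ℕ} {i n : ℕ} {W : Set ℕ} (hW : CE W)
    (hsound : ∀ h' ∈ PiNat.cylinder h n,
      enumOp W (tgraph (restrCols (interleave g h') {j | j ≠ 2 * i})) ⊆ tgraph (col g i))
    (heq : tgraph (col g i) = enumOp W (tgraph (restrCols (interleave g h) {j | j ≠ 2 * i}))) :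
    teRed (col g i) (restrCols g {j | j ≠ i}) := by
  classical
  refine ⟨evenReduction W ((List.range n).map h), ce_evenReduction hW _, ?_⟩
  apply Set.Subset.antisymm
  · intro x hx
    rw [heq] at hx
    obtain ⟨u, hu, hD⟩ := hx
    -- Both translations of questions in `D_u` are `< u`, so it suffices to record the oracle
    -- `restrCols g` below `u` and the function `h` below `n + u`.
    refine ⟨Nat.ofBits (n := u) fun k =>
      decide (k.1 ∈ tgraph (restrCols g {j | j ≠ i})), ?_, ?_⟩
    · refine ⟨u, (List.range u).map fun m => h (n + m), by simpa using hu, fun k hk => ?_⟩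
      have hku : k < u := lt_of_mem_Dset hk
      have e : (List.range n).map h ++ (List.range u).map (fun m => h (n + m))
          = (List.range (n + u)).map h := by
        rw [List.range_add]; simp
      rw [e]
      rcases (mem_oracle_even g h i k).1 (hD hk) with ⟨hc, hg⟩ | ⟨hc, hh⟩
      · refine Or.inl ⟨hc, ?_⟩
        have : halfCode k < u := (halfCode_le k).trans_lt hku
        simp [Nat.testBit_ofBits_lt _ _ this, hg]
      · refine Or.inr ⟨hc, ?_⟩
        have : (halfCode k).unpair.1 < n + u := by have := halfCode_fst_le k; omega
        simp [List.getElem?_range this, hh]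
    · intro k hk
      have hk' : Nat.testBit _ k = true := hk
      by_cases hku : k < u
      · rw [Nat.testBit_ofBits_lt _ _ hku] at hk'
        simpa using hk'
      · rw [Nat.testBit_ofBits_ge _ _ (not_lt.1 hku)] at hk'
        simp at hk'
  · rintro x ⟨v, ⟨u, s, hu, hk⟩, hv⟩
    simp only [Nat.unpair_pair] at hu hk
    refine hsound (fun m => (((List.range n).map h ++ s)[m]?).getD 0) ?_ ⟨u, hu, fun k hkD => ?_⟩
    · rw [PiNat.mem_cylinder_iff]
      intro m hm
      rw [List.getElem?_append_left (by simpa using hm)]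
      simp [List.getElem?_range hm]
    · rw [mem_oracle_even]
      rcases hk k hkD with ⟨hc, hb⟩ | ⟨hc, hs⟩
      · exact Or.inl ⟨hc, hv hb⟩
      · exact Or.inr ⟨hc, by simp [hs]⟩

/-! ### The category argument -/

/-- Those `h` for which `W` reduces column `j` of `g ⊕ h` to the other columns. -/
def badSet (g : ℕ → ℕ) (W : Set ℕ) (j : ℕ) : Set (ℕ → ℕ) :=
  {h | tgraph (col (interleave g h) j) =
    enumOp W (tgraph (restrCols (interleave g h) {l | l ≠ j}))}

/-- Those `h` for which `W` enumerates a false value of column `j` of `g ⊕ h`. -/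
def wrongSet (g : ℕ → ℕ) (W : Set ℕ) (j : ℕ) : Set (ℕ → ℕ) :=
  {h | ∃ x, x ∈ enumOp W (tgraph (restrCols (interleave g h) {l | l ≠ j})) ∧
    x ∉ tgraph (col (interleave g h) j)}

theorem continuous_interleave (g : ℕ → ℕ) (n : ℕ) :
    Continuous fun h : ℕ → ℕ => interleave g h n := by
  unfold interleave
  split_ifs <;> fun_prop

theorem continuous_restrCols (g : ℕ → ℕ) (I : Set ℕ) (n : ℕ) :
    Continuous fun h : ℕ → ℕ => restrCols (interleave g h) I n := by
  unfold restrCols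
  split_ifs
  · exact continuous_interleave g n
  · exact continuous_const

theorem isOpen_wrongSet (g : ℕ → ℕ) (W : Set ℕ) (j : ℕ) : IsOpen (wrongSet g W j) := by
  have e : wrongSet g W j = ⋃ x, ⋃ u, ⋃ (_ : Nat.pair x u ∈ W),
      (⋂ k ∈ Dset u, {h | restrCols (interleave g h) {l | l ≠ j} k.unpair.1 = k.unpair.2}) ∩
        {h | interleave g h (Nat.pair j x.unpair.1) = x.unpair.2}ᶜ := by
    ext h
    simp only [wrongSet, enumOp, tgraph, col, Set.mem_ofPred_eq, Set.mem_iUnion, Set.mem_inter_iff,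
      Set.mem_iInter, Set.mem_compl_iff, exists_prop, Set.subset_def]
    constructor
    · rintro ⟨x, ⟨u, hu, hD⟩, hx⟩
      exact ⟨x, u, hu, hD, hx⟩
    · rintro ⟨x, u, hu, hD, hx⟩
      exact ⟨x, ⟨u, hu, hD⟩, hx⟩
  rw [e]
  refine isOpen_iUnion fun x => isOpen_iUnion fun u => isOpen_iUnion fun _ => IsOpen.inter ?_ ?_
  · refine Set.Finite.isOpen_biInter ((Set.finite_Iio u).subset fun k hk => lt_of_mem_Dset hk) ?_
    intro k _
    exact (isOpen_discrete {k.unpair.2}).preimage (continuous_restrCols g _ _)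
  · exact (isOpen_discrete ({x.unpair.2}ᶜ : Set ℕ)).preimage (continuous_interleave g _)

theorem dense_interior_compl_badSet {g : ℕ → ℕ} (hg : CompIndep g) {W : Set ℕ} (hW : CE W)
    (j : ℕ) : Dense (interior (badSet g W j)ᶜ) := by
  rw [(PiNat.isTopologicalBasis_cylinders fun _ => ℕ).dense_iff]
  rintro _ ⟨f, n, rfl⟩ -
  by_contra hne
  rw [Set.not_nonempty_iff_eq_empty, ← Set.disjoint_iff_inter_eq_empty,
    Set.disjoint_left] at hne
  have hU : ∀ h ∈ PiNat.cylinder f n, h ∉ wrongSet g W j := by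
    refine fun h hh hw => hne hh (interior_maximal ?_ (isOpen_wrongSet g W j) hw)
    rintro h' ⟨x, hx, hx'⟩ hb
    rw [badSet, Set.mem_ofPred_eq] at hb
    exact hx' (hb ▸ hx)
  obtain ⟨h, hh, hb⟩ : ∃ h ∈ PiNat.cylinder f n, h ∈ badSet g W j := by
    by_contra! hno
    exact hne (PiNat.self_mem_cylinder f n)
      (interior_maximal hno (PiNat.isOpen_cylinder _ f n) (PiNat.self_mem_cylinder f n))
  rw [badSet, Set.mem_ofPred_eq] at hb
  rcases Nat.even_or_odd' j with ⟨i, rfl | rfl⟩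
  · have hcol : ∀ h, col (interleave g h) (2 * i) = col g i := by
      intro h; ext x; simp [col, interleave]
    rw [hcol] at hb
    refine hg i (even_teRed (n := n) hW (fun h' hh' x hx => ?_) hb)
    by_contra hx'
    refine hU h' ?_ ⟨x, hx, by rwa [hcol]⟩
    rwa [PiNat.mem_cylinder_iff_eq.1 hh] at hh'
  · have hdiv : (2 * i + 1) / 2 = i := by omega
    -- `⟨i, n⟩ ≥ n`, so changing `h` there stays inside the cylinder.
    set h' := Function.update h (Nat.pair i n) (h (Nat.pair i n) + 1) with hh'
    have hor : restrCols (interleave g h') {l | l ≠ 2 * i + 1} =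
        restrCols (interleave g h) {l | l ≠ 2 * i + 1} := by
      ext m
      simp only [restrCols, Set.mem_ofPred_eq]
      split_ifs with hm
      · simp only [interleave]
        split_ifs with hpar
        · rfl
        · rw [hh', Function.update_of_ne]
          rw [ne_eq, Nat.pair_eq_pair]
          omega
      · rfl
    refine hU h' ?_ ⟨Nat.pair n (h (Nat.pair i n)), ?_, ?_⟩
    · rw [PiNat.mem_cylinder_iff] at hh ⊢
      intro m hm
      rw [hh', Function.update_of_ne, hh m hm]
      have := Nat.right_le_pair i n
      omega
    · rw [hor, ← hb]
      simp [tgraph, col, interleave, hdiv]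
    · simp [tgraph, col, interleave, hdiv, hh']

/-- Every computably e-independent total function `g` extends to a computably
e-independent interleaving `g ⊕ h`. -/
theorem exists_independent_interleaving (g : ℕ → ℕ) (hg : CompIndep g) :
    ∃ h : ℕ → ℕ, CompIndep (interleave g h) := by
  have hdense : Dense (⋂ p : Nat.Partrec.Code × ℕ,
      interior (badSet g {x | (p.1.eval x).Dom} p.2)ᶜ) :=
    dense_iInter_of_isOpen (fun _ => isOpen_interior) fun p =>
      dense_interior_compl_badSet hg (ce_iff_code.2 ⟨p.1, rfl⟩) p.2
  obtain ⟨h, hh⟩ := hdense.nonempty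
  refine ⟨h, ?_⟩
  rintro j ⟨W, hW, he⟩
  obtain ⟨c, rfl⟩ := ce_iff_code.1 hW
  exact interior_subset (Set.mem_iInter.1 hh (c, j)) he
end
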